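/- Let n ≥ 2, let Ω ⊂ ℝⁿ be an open bounded set contained in the closed ball of radius R centered at the origin, let Ω₁ ⊂ ℝⁿ be an open bounded set with closure(Ω) ⊂ Ω₁, and let f₁, f₂ : ℝⁿ → ℝ be continuous, supported in the closure of Ω, with |f_j(x)| ≤ M for all x and j = 1,2. Then ‖Kf₁ − Kf₂‖_{L²(Ω₁)} ≤ e^{2RM} ‖X'X|f₁ − f₂|‖_{L²(Ω₁)}. -/

import Mathlib

open MeasureTheory Metric Real

/-- The `n`-dimensional Euclidean space. -/
abbrev Euc (n : ℕ) := EuclideanSpace ℝ (Fin n)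

/-- The standard surface measure on the unit sphere `S^{n-1} ⊂ ℝⁿ`. -/
noncomputable def sphereMeasure (n : ℕ) : Measure (sphere (0 : Euc n) 1) :=
  (volume : Measure (Euc n)).toSphere

/-- The surface measure `|S^{n-1}|` of the unit sphere in `ℝⁿ`. -/
noncomputable def sphereVol (n : ℕ) : ℝ := (sphereMeasure n Set.univ).toReal

/-- The X-ray transform `Xf(x,θ) = ∫_ℝ f(x+sθ) ds`. -/
noncomputable def Xray {n : ℕ} (f : Euc n → ℝ) (x θ : Euc n) : ℝ :=
  ∫ s : ℝ, f (x + s • θ)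

/-- The normal operator `X'Xf(x) = ∫_{S^{n-1}} Xf(x,θ) dθ`. -/
noncomputable def normalOp {n : ℕ} (f : Euc n → ℝ) (x : Euc n) : ℝ :=
  ∫ θ : sphere (0 : Euc n) 1, Xray f x (θ : Euc n) ∂(sphereMeasure n)

/-- The single pixel X-ray transform `Kf(x) = ∫_{S^{n-1}} e^{-Xf(x,θ)} dθ`. -/
noncomputable def singlePixel {n : ℕ} (f : Euc n → ℝ) (x : Euc n) : ℝ :=
  ∫ θ : sphere (0 : Euc n) 1, Real.exp (-(Xray f x (θ : Euc n))) ∂(sphereMeasure n)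

/-- The Fourier transform `𝓕f(ξ) = ∫ e^{-i x·ξ} f(x) dx`. -/
noncomputable def FT {n : ℕ} (f : Euc n → ℝ) (ξ : Euc n) : ℂ :=
  ∫ x : Euc n, Complex.exp (-(Complex.I * ((inner ℝ x ξ : ℝ) : ℂ))) * (f x : ℂ)

/-- The inverse Fourier transform `𝓕⁻¹g(x) = (2π)^{-n} ∫ e^{i x·ξ} g(ξ) dξ`. -/
noncomputable def invFT {n : ℕ} (g : Euc n → ℂ) (x : Euc n) : ℂ :=
  ((((2 * π) ^ n)⁻¹ : ℝ) : ℂ) * ∫ ξ : Euc n, Complex.exp (Complex.I * ((inner ℝ x ξ : ℝ) : ℂ)) * g ξ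

/-- The `L²(ℝⁿ)` norm `(∫ |f|²)^{1/2}`. -/
noncomputable def L2norm {n : ℕ} (f : Euc n → ℝ) : ℝ :=
  (∫ x : Euc n, f x ^ 2) ^ ((1 : ℝ) / 2)

/-- The `H¹(U)` norm `(∫_U |u|²)^{1/2} + (∫_U |∇u|²)^{1/2}`. -/
noncomputable def H1norm {n : ℕ} (U : Set (Euc n)) (u : Euc n → ℝ) : ℝ :=
  (∫ x in U, u x ^ 2) ^ ((1 : ℝ) / 2) + (∫ x in U, ‖fderiv ℝ u x‖ ^ 2) ^ ((1 : ℝ) / 2)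

/-!
A unit-speed line meets a ball of radius `R` in a segment of length at most `2R`, so `Xf ≥ -2RM`
along every line when `f ≥ -M`. Since `t ↦ e^{-t}` is `e^{2RM}`-Lipschitz on `[-2RM, ∞)` and
`|Xf₁ - Xf₂| ≤ X|f₁ - f₂|`, integrating over the directions gives the pointwise bound
`|Kf₁ - Kf₂| ≤ e^{2RM} X'X|f₁ - f₂|`, hence the bound between the norms.
-/

section Line

variable {E : Type*} [NormedAddCommGroup E] [InnerProductSpace ℝ E] {c θ : E} {R : ℝ}

lemma support_comp_line_subset {F : Type*} [Zero F] {f : E → F}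
    (hs : Function.support f ⊆ closedBall c R) (x : E) (hθ : ‖θ‖ = 1) :
    Function.support (fun s : ℝ => f (x + s • θ)) ⊆ closedBall (inner ℝ (c - x) θ) R := by
  intro s hs'
  have h_inner : s - inner ℝ (c - x) θ = inner ℝ (x + s • θ - c) θ := by
    simp only [inner_sub_left, inner_add_left, real_inner_smul_left, real_inner_self_eq_norm_sq, hθ]
    ring
  rw [mem_closedBall, Real.dist_eq, h_inner]
  calc |inner ℝ (x + s • θ - c) θ| ≤ ‖x + s • θ - c‖ * ‖θ‖ := abs_real_inner_le_norm _ _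
    _ = dist (x + s • θ) c := by rw [hθ, mul_one, dist_eq_norm]
    _ ≤ R := hs hs'

lemma integrable_comp_line [MeasurableSpace E] [BorelSpace E] {f : E → ℝ} {a b : ℝ}
    (hf : Measurable f) (hs : Function.support f ⊆ closedBall c R)
    (hab : ∀ y, f y ∈ Set.Icc a b) (x : E) (hθ : ‖θ‖ = 1) :
    Integrable fun s : ℝ => f (x + s • θ) := by
  rw [← integrableOn_iff_integrable_of_support_subset (support_comp_line_subset hs x hθ)]
  have h_line : Continuous fun s : ℝ => x + s • θ := by fun_prop
  have : IsFiniteMeasure (volume.restrict (closedBall (inner ℝ (c - x) θ) R)) :=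
    isFiniteMeasure_restrict.mpr measure_closedBall_lt_top.ne
  exact .of_mem_Icc a b (hf.comp h_line.measurable).aemeasurable (.of_forall fun _ => hab _)

end Line

lemma support_abs_sub_subset {α G : Type*} [AddGroup G] [LinearOrder G] [AddLeftMono G]
    {f g : α → G} {s : Set α} (hf : Function.support f ⊆ s)
    (hg : Function.support g ⊆ s) : Function.support (fun y => |f y - g y|) ⊆ s :=
  (Function.support_comp_subset abs_zero _).trans
    ((Function.support_sub f g).trans (Set.union_subset hf hg))

lemma abs_sub_mem_Icc {G : Type*} [AddCommGroup G] [LinearOrder G] [IsOrderedAddMonoid G]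
    {a b u v : G} (hu : u ∈ Set.Icc a b) (hv : v ∈ Set.Icc a b) :
    |u - v| ∈ Set.Icc 0 (b - a) :=
  ⟨abs_nonneg _, abs_sub_le_of_le_of_le hu.1 hu.2 hv.1 hv.2⟩

lemma abs_exp_sub_exp_le {u v C : ℝ} (hu : u ≤ C) (hv : v ≤ C) :
    |exp u - exp v| ≤ exp C * |u - v| :=
  (convex_Iic C).norm_image_sub_le_of_norm_hasDerivWithin_le
    (fun t _ => (hasDerivAt_exp t).hasDerivWithinAt)
    (fun t ht => by simpa only [norm_eq_abs, abs_exp] using exp_le_exp.mpr ht) hv hu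

lemma lpNorm_two_eq_rpow_integral_sq {α : Type*} [MeasurableSpace α] {μ : Measure α} {u : α → ℝ}
    (hu : AEStronglyMeasurable u μ) : lpNorm u 2 μ = (∫ x, u x ^ 2 ∂μ) ^ ((1 : ℝ) / 2) := by
  simp [lpNorm_eq_integral_norm_rpow_toReal two_ne_zero ENNReal.ofNat_ne_top hu]

lemma rpow_integral_sq_le_of_eLpNorm_two_le {α : Type*} [MeasurableSpace α] {μ : Measure α}
    {u v : α → ℝ} {C : ℝ} (hu : AEStronglyMeasurable u μ) (hv : MemLp v 2 μ) (hC : 0 ≤ C)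
    (h : eLpNorm u 2 μ ≤ ENNReal.ofReal C * eLpNorm v 2 μ) :
    (∫ x, u x ^ 2 ∂μ) ^ ((1 : ℝ) / 2) ≤ C * (∫ x, v x ^ 2 ∂μ) ^ ((1 : ℝ) / 2) := by
  rw [← lpNorm_two_eq_rpow_integral_sq hu, ← lpNorm_two_eq_rpow_integral_sq hv.1,
    ← toReal_eLpNorm hu, ← toReal_eLpNorm hv.1, ← ENNReal.toReal_ofReal_mul _ _ hC]
  exact ENNReal.toReal_mono (ENNReal.mul_ne_top ENNReal.ofReal_ne_top hv.eLpNorm_ne_top) h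

instance isFiniteMeasure_sphereMeasure (n : ℕ) : IsFiniteMeasure (sphereMeasure n) :=
  inferInstanceAs (IsFiniteMeasure (volume : Measure (Euc n)).toSphere)

section Xray

variable {n : ℕ} {f g : Euc n → ℝ} {c θ : Euc n} {R a b : ℝ}

lemma Xray_eq_setIntegral_closedBall (hs : Function.support f ⊆ closedBall c R) (x : Euc n)
    (hθ : ‖θ‖ = 1) :
    Xray f x θ = ∫ s in closedBall (inner ℝ (c - x) θ) R, f (x + s • θ) :=
  (setIntegral_eq_integral_of_forall_compl_eq_zero fun _ =>
    Function.support_subset_iff'.mp (support_comp_line_subset hs x hθ) _).symm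

lemma Xray_mem_Icc (hR : 0 ≤ R) (hf : Measurable f) (hs : Function.support f ⊆ closedBall c R)
    (hab : ∀ y, f y ∈ Set.Icc a b) (x : Euc n) (hθ : ‖θ‖ = 1) :
    Xray f x θ ∈ Set.Icc (2 * R * a) (2 * R * b) := by
  have h_int := (integrable_comp_line hf hs hab x hθ).integrableOn
    (s := closedBall (inner ℝ (c - x) θ) R)
  have h_const (k : ℝ) : 2 * R * k = ∫ _ in closedBall (inner ℝ (c - x) θ) R, k := by
    rw [setIntegral_const, Real.volume_real_closedBall hR, smul_eq_mul]
  have h_const_int (k : ℝ) : IntegrableOn (fun _ => k) (closedBall (inner ℝ (c - x) θ) R) :=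
    integrableOn_const measure_closedBall_lt_top.ne
  rw [Xray_eq_setIntegral_closedBall hs x hθ, h_const, h_const]
  exact ⟨integral_mono (h_const_int a) h_int fun _ => (hab _).1,
    integral_mono h_int (h_const_int b) fun _ => (hab _).2⟩

lemma abs_Xray_sub_le {x : Euc n} (hf : Integrable fun s : ℝ => f (x + s • θ))
    (hg : Integrable fun s : ℝ => g (x + s • θ)) :
    |Xray f x θ - Xray g x θ| ≤ Xray (fun y => |f y - g y|) x θ := by
  rw [Xray, Xray, ← integral_sub hf hg]
  exact abs_integral_le_integral_abs

lemma measurable_Xray (hf : Measurable f) : Measurable fun p : Euc n × Euc n => Xray f p.1 p.2 := by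
  have h_line : Continuous fun q : (Euc n × Euc n) × ℝ => q.1.1 + q.2 • q.1.2 := by fun_prop
  exact (hf.comp h_line.measurable).stronglyMeasurable.integral_prod_right'.measurable

lemma measurable_Xray_sphere (hf : Measurable f) :
    Measurable fun p : Euc n × sphere (0 : Euc n) 1 => Xray f p.1 p.2 :=
  (measurable_Xray hf).comp (measurable_fst.prodMk measurable_snd.subtype_val)

lemma measurable_normalOp (hf : Measurable f) : Measurable (normalOp f) :=
  (measurable_Xray_sphere hf).stronglyMeasurable.integral_prod_right'.measurable

lemma measurable_singlePixel (hf : Measurable f) : Measurable (singlePixel f) :=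
  (measurable_Xray_sphere hf).neg.exp.stronglyMeasurable.integral_prod_right'.measurable

lemma integrable_Xray_sphere (hR : 0 ≤ R) (hf : Measurable f)
    (hs : Function.support f ⊆ closedBall c R) (hab : ∀ y, f y ∈ Set.Icc a b) (x : Euc n) :
    Integrable (fun θ : sphere (0 : Euc n) 1 => Xray f x θ) (sphereMeasure n) :=
  .of_mem_Icc _ _ ((measurable_Xray_sphere hf).comp measurable_prodMk_left).aemeasurable
    (.of_forall fun θ => Xray_mem_Icc hR hf hs hab x (norm_eq_of_mem_sphere θ))

lemma integrable_exp_neg_Xray_sphere (hR : 0 ≤ R) (hf : Measurable f)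
    (hs : Function.support f ⊆ closedBall c R) (hab : ∀ y, f y ∈ Set.Icc a b) (x : Euc n) :
    Integrable (fun θ : sphere (0 : Euc n) 1 => exp (-Xray f x θ)) (sphereMeasure n) := by
  refine .of_mem_Icc 0 (exp (-(2 * R * a)))
    ((measurable_Xray_sphere hf).neg.exp.comp measurable_prodMk_left).aemeasurable
    (.of_forall fun θ => ⟨(exp_pos _).le, exp_le_exp.mpr (neg_le_neg ?_)⟩)
  exact (Xray_mem_Icc hR hf hs hab x (norm_eq_of_mem_sphere θ)).1

lemma memLp_normalOp {μ : Measure (Euc n)} [IsFiniteMeasure μ] (hR : 0 ≤ R) (hf : Measurable f)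
    (hs : Function.support f ⊆ closedBall c R) (hab : ∀ y, f y ∈ Set.Icc a b) (p : ENNReal) :
    MemLp (normalOp f) p μ := by
  refine .of_bound (measurable_normalOp hf).aestronglyMeasurable
    (max |2 * R * a| |2 * R * b| * (sphereMeasure n).real Set.univ) (.of_forall fun x => ?_)
  refine norm_integral_le_of_norm_le_const (.of_forall fun θ => ?_)
  have h := Xray_mem_Icc hR hf hs hab x (norm_eq_of_mem_sphere θ)
  exact abs_le_max_abs_abs h.1 h.2

lemma abs_singlePixel_sub_le (hR : 0 ≤ R) (hf : Measurable f) (hg : Measurable g)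
    (hfs : Function.support f ⊆ closedBall c R) (hgs : Function.support g ⊆ closedBall c R)
    (hfab : ∀ y, f y ∈ Set.Icc a b) (hgab : ∀ y, g y ∈ Set.Icc a b) (x : Euc n) :
    |singlePixel f x - singlePixel g x| ≤
      exp (-(2 * R * a)) * normalOp (fun y => |f y - g y|) x := by
  have hKf := integrable_exp_neg_Xray_sphere hR hf hfs hfab x
  have hKg := integrable_exp_neg_Xray_sphere hR hg hgs hgab x
  have hX : Integrable (fun θ : sphere (0 : Euc n) 1 => Xray (fun y => |f y - g y|) x θ)
      (sphereMeasure n) :=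
    integrable_Xray_sphere hR (hf.sub hg).abs (support_abs_sub_subset hfs hgs)
      (fun y => abs_sub_mem_Icc (hfab y) (hgab y)) x
  rw [singlePixel, singlePixel, normalOp, ← integral_sub hKf hKg, ← integral_const_mul]
  refine abs_integral_le_integral_abs.trans
    (integral_mono (hKf.sub hKg).abs (hX.const_mul _) fun θ => ?_)
  have hθ : ‖(θ : Euc n)‖ = 1 := norm_eq_of_mem_sphere θ
  calc |exp (-Xray f x θ) - exp (-Xray g x θ)|
      ≤ exp (-(2 * R * a)) * |-Xray f x θ - -Xray g x θ| :=
        abs_exp_sub_exp_le (neg_le_neg (Xray_mem_Icc hR hf hfs hfab x hθ).1)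
          (neg_le_neg (Xray_mem_Icc hR hg hgs hgab x hθ).1)
    _ = exp (-(2 * R * a)) * |Xray f x θ - Xray g x θ| := by
        rw [neg_sub_neg, abs_sub_comm]
    _ ≤ exp (-(2 * R * a)) * Xray (fun y => |f y - g y|) x θ := by
        gcongr
        exact abs_Xray_sub_le (integrable_comp_line hf hfs hfab x hθ)
          (integrable_comp_line hg hgs hgab x hθ)

lemma eLpNorm_singlePixel_sub_le (hR : 0 ≤ R) (hf : Measurable f) (hg : Measurable g)
    (hfs : Function.support f ⊆ closedBall c R) (hgs : Function.support g ⊆ closedBall c R)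
    (hfab : ∀ y, f y ∈ Set.Icc a b) (hgab : ∀ y, g y ∈ Set.Icc a b) (p : ENNReal)
    (μ : Measure (Euc n)) :
    eLpNorm (fun x => singlePixel f x - singlePixel g x) p μ ≤
      ENNReal.ofReal (exp (-(2 * R * a))) * eLpNorm (normalOp fun y => |f y - g y|) p μ :=
  eLpNorm_le_mul_eLpNorm_of_ae_le_mul (.of_forall fun x =>
    (abs_singlePixel_sub_le hR hf hg hfs hgs hfab hgab x).trans
      (mul_le_mul_of_nonneg_left (le_abs_self _) (exp_pos _).le)) p

theorem singlePixel_difference_L2_general {M C : ℝ} {μ : Measure (Euc n)} [IsFiniteMeasure μ]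
    (hR : 0 ≤ R) (hf : Measurable f) (hg : Measurable g)
    (hfs : Function.support f ⊆ closedBall c R) (hgs : Function.support g ⊆ closedBall c R)
    (hfM : ∀ y, f y ∈ Set.Icc (-M) C) (hgM : ∀ y, g y ∈ Set.Icc (-M) C) :
    (∫ x, (singlePixel f x - singlePixel g x) ^ 2 ∂μ) ^ ((1 : ℝ) / 2) ≤
      exp (2 * R * M) * (∫ x, normalOp (fun y => |f y - g y|) x ^ 2 ∂μ) ^ ((1 : ℝ) / 2) := by
  have hK : Measurable fun x => singlePixel f x - singlePixel g x :=
    (measurable_singlePixel hf).sub (measurable_singlePixel hg)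
  have hN : MemLp (normalOp fun y => |f y - g y|) 2 μ :=
    memLp_normalOp hR (hf.sub hg).abs (support_abs_sub_subset hfs hgs)
      (fun y => abs_sub_mem_Icc (hfM y) (hgM y)) 2
  have h_eLpNorm := eLpNorm_singlePixel_sub_le hR hf hg hfs hgs hfM hgM 2 μ
  rw [mul_neg, neg_neg] at h_eLpNorm
  exact rpow_integral_sq_le_of_eLpNorm_two_le hK.aestronglyMeasurable hN (exp_pos _).le h_eLpNorm

end Xray

/-- For `n ≥ 2`, `Ω` open bounded contained in the closed ball of radius `R`,
`Ω₁` open bounded with `closure Ω ⊂ Ω₁`, and `f₁, f₂` continuous, supported in `closure Ω`,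
bounded by `M`, one has `‖Kf₁ − Kf₂‖_{L²(Ω₁)} ≤ e^{2RM} ‖X'X|f₁ − f₂|‖_{L²(Ω₁)}`. -/
theorem singlePixel_difference_L2 (n : ℕ) (hn : 2 ≤ n) (R M : ℝ) (hR : 0 ≤ R)
    (Ω Ω₁ : Set (Euc n)) (hΩo : IsOpen Ω) (hΩb : Bornology.IsBounded Ω)
    (hΩR : Ω ⊆ Metric.closedBall 0 R)
    (hΩ₁o : IsOpen Ω₁) (hΩ₁b : Bornology.IsBounded Ω₁) (hΩΩ₁ : closure Ω ⊆ Ω₁)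
    (f₁ f₂ : Euc n → ℝ) (hf₁ : Continuous f₁) (hf₂ : Continuous f₂)
    (hs₁ : Function.support f₁ ⊆ closure Ω) (hs₂ : Function.support f₂ ⊆ closure Ω)
    (hM₁ : ∀ x, |f₁ x| ≤ M) (hM₂ : ∀ x, |f₂ x| ≤ M) :
    (∫ x in Ω₁, (singlePixel f₁ x - singlePixel f₂ x) ^ 2) ^ ((1 : ℝ) / 2) ≤
      Real.exp (2 * R * M) *
        (∫ x in Ω₁, (normalOp (fun y => |f₁ y - f₂ y|) x) ^ 2) ^ ((1 : ℝ) / 2) := by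
  have hΩ : closure Ω ⊆ closedBall 0 R := closure_minimal hΩR isClosed_closedBall
  have : IsFiniteMeasure (volume.restrict Ω₁) := isFiniteMeasure_restrict.mpr hΩ₁b.measure_lt_top.ne
  exact singlePixel_difference_L2_general hR hf₁.measurable hf₂.measurable (hs₁.trans hΩ)
    (hs₂.trans hΩ) (fun x => abs_le.mp (hM₁ x)) fun x => abs_le.mp (hM₂ x)
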